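/- For every n ≥ 5, the set X_n = {0, 1, …, n−1} with the operation x*y = 0 if x ≤ y, x*0 = x, x*y = 1 if x = y+1, and x*y = x−y−1 if x > y+1 and y ≥ 1, is a BCK-algebra, and its BCK-order coincides with the natural order of the integers 0, 1, …, n−1; in particular it is linearly ordered. -/

import Mathlib

/-- The operation of the linearly ordered BCK-algebra `X_n = {0, 1, …, n−1}`:
`x*y = 0` if `x ≤ y`, `x*0 = x`, `x*y = 1` if `x = y+1`, and `x*y = x−y−1`
if `x > y+1` and `y ≥ 1`. -/
def starOp {n : ℕ} (x y : Fin n) : Fin n :=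
  if _h : (x : ℕ) ≤ (y : ℕ) then ⟨0, Nat.lt_of_le_of_lt (Nat.zero_le _) x.isLt⟩
  else if (y : ℕ) = 0 then x
  else if (x : ℕ) = (y : ℕ) + 1 then ⟨1, by have := x.isLt; omega⟩
  else ⟨(x : ℕ) - (y : ℕ) - 1, by have := x.isLt; omega⟩

theorem starOp_val {n : ℕ} (x y : Fin n) :
    ((x : ℕ) ≤ y ∧ (starOp x y : ℕ) = 0) ∨
    ((y : ℕ) < x ∧ (y : ℕ) = 0 ∧ (starOp x y : ℕ) = x) ∨
    ((x : ℕ) = y + 1 ∧ 0 < (y : ℕ) ∧ (starOp x y : ℕ) = 1) ∨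
    ((y : ℕ) + 1 < x ∧ 0 < (y : ℕ) ∧ (starOp x y : ℕ) + y + 1 = x) := by
  unfold starOp
  split_ifs <;> simp <;> omega

theorem starOp_zero_iff {n : ℕ} (hn : 0 < n) (x y : Fin n) :
    starOp x y = ⟨0, hn⟩ ↔ (x : ℕ) ≤ (y : ℕ) := by
  rw [Fin.ext_iff]
  have := starOp_val x y
  simp only
  omega

/-- For every `n ≥ 5`, the set `X_n = {0, 1, …, n−1}` with the operation
`starOp` is a BCK-algebra (axioms (1)–(5)), and its BCK-order coincides with
the natural order of the integers `0, 1, …, n−1`; in particular it is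
linearly ordered. -/
theorem starOp_isBCK_linear (n : ℕ) (hn : 5 ≤ n) :
    (∀ x y z : Fin n,
      starOp (starOp (starOp x y) (starOp z y)) (starOp x z) = ⟨0, by omega⟩) ∧
    (∀ x y : Fin n, starOp (starOp x (starOp x y)) y = ⟨0, by omega⟩) ∧
    (∀ x : Fin n, starOp x ⟨0, by omega⟩ = x) ∧
    (∀ x : Fin n, starOp ⟨0, by omega⟩ x = ⟨0, by omega⟩) ∧
    (∀ x y : Fin n, starOp x y = ⟨0, by omega⟩ → starOp y x = ⟨0, by omega⟩ → x = y) ∧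
    (∀ x y : Fin n, starOp x y = ⟨0, by omega⟩ ↔ (x : ℕ) ≤ (y : ℕ)) ∧
    (∀ x y : Fin n, starOp x y = ⟨0, by omega⟩ ∨ starOp y x = ⟨0, by omega⟩) := by
  have hz := starOp_zero_iff (show 0 < n by omega)
  refine ⟨?_, ?_, ?_, ?_, ?_, hz, ?_⟩
  · intro x y z
    rw [hz]
    have h1 := starOp_val x y
    have h2 := starOp_val z y
    have h3 := starOp_val x z
    have h4 := starOp_val (starOp x y) (starOp z y)
    generalize starOp (starOp x y) (starOp z y) = d at *
    generalize starOp x y = a at *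
    generalize starOp z y = b at *
    generalize starOp x z = c at *
    omega
  · intro x y
    rw [hz]
    have h1 := starOp_val x y
    have h2 := starOp_val x (starOp x y)
    omega
  · intro x
    rw [Fin.ext_iff]
    have h1 := starOp_val x ⟨0, by omega⟩
    simp only at h1
    omega
  · intro x
    rw [hz]
    simp
  · intro x y h1 h2
    rw [hz] at h1 h2
    exact Fin.ext (by omega)
  · intro x y
    rw [hz, hz]
    omega
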